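/- arXiv:1602.08610 — 2 statements merged into one kernel-verified Lean document; each statement's English description precedes it below -/
import Mathlib

section
/- For all natural numbers α ≥ 1, a ≥ 1, and b ≥ 1, one has (a+b+α−1)! · (α−1)! / (a+b+2α−1)! > [(a+α−1)! · (α−1)! / (a+2α−1)!] · [(b+α−1)! · (α−1)! / (b+2α−1)!]; equivalently, (a+b+α−1)! · (a+2α−1)! · (b+2α−1)! > (a+b+2α−1)! · (a+α−1)! · (b+α−1)! · (α−1)!. -/
/-!
Write `α = k + 1`. Increasing `b` by one multiplies the left-hand side by
`(a + b + 2k + 2) (b + k + 1)` and the right-hand side by `(a + b + k + 1) (b + 2k + 2)`; the second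
factor exceeds the first by `a (k + 1) > 0`. Hence the weak inequality, which holds at `b = 0`
because `k! k! ≤ (2k + 1)!`, propagates to all `b`, and the last step makes it strict for `b ≥ 1`.
At `b = 0`, `k = 0` there is equality, so the strict form cannot start the induction.
-/

open Nat

/-- The induction step: the weak inequality at `b` gives the strict one at `b + 1`. -/
lemma factorial_step (k a b : ℕ) (ha : 1 ≤ a)
    (h : (a + b + 2 * k + 1)! * (a + k)! * (b + k)! * k !
      ≤ (a + b + k)! * (a + 2 * k + 1)! * (b + 2 * k + 1)!) :
    (a + (b + 1) + 2 * k + 1)! * (a + k)! * (b + 1 + k)! * k !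
      < (a + (b + 1) + k)! * (a + 2 * k + 1)! * (b + 1 + 2 * k + 1)! := by
  have e₁ : (a + (b + 1) + 2 * k + 1)! = (a + b + 2 * k + 2) * (a + b + 2 * k + 1)! := by
    rw [← Nat.factorial_succ]; congr 1; ring
  have e₂ : (b + 1 + k)! = (b + k + 1) * (b + k)! := by
    rw [← Nat.factorial_succ]; congr 1; ring
  have e₃ : (a + (b + 1) + k)! = (a + b + k + 1) * (a + b + k)! := by
    rw [← Nat.factorial_succ]; congr 1; ring
  have e₄ : (b + 1 + 2 * k + 1)! = (b + 2 * k + 2) * (b + 2 * k + 1)! := by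
    rw [← Nat.factorial_succ]; congr 1; ring
  have hfac : (a + b + 2 * k + 2) * (b + k + 1) < (a + b + k + 1) * (b + 2 * k + 2) := by
    nlinarith [Nat.zero_le (a * k)]
  rw [e₁, e₂, e₃, e₄]
  calc _ = ((a + b + 2 * k + 2) * (b + k + 1))
            * ((a + b + 2 * k + 1)! * (a + k)! * (b + k)! * k !) := by ring
    _ < ((a + b + k + 1) * (b + 2 * k + 2))
            * ((a + b + k)! * (a + 2 * k + 1)! * (b + 2 * k + 1)!) :=
        Nat.mul_lt_mul_of_lt_of_le hfac h (by positivity)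
    _ = _ := by ring

lemma factorial_weak (k a b : ℕ) (ha : 1 ≤ a) :
    (a + b + 2 * k + 1)! * (a + k)! * (b + k)! * k !
      ≤ (a + b + k)! * (a + 2 * k + 1)! * (b + 2 * k + 1)! := by
  induction b with
  | zero =>
    have h : k ! * k ! ≤ (2 * k + 1)! :=
      (Nat.le_of_dvd (Nat.factorial_pos _) (Nat.factorial_mul_factorial_dvd_factorial_add k k)).trans
        (Nat.factorial_le (by omega))
    simp only [add_zero, zero_add]
    calc _ = (a + k)! * (a + 2 * k + 1)! * (k ! * k !) := by ring
      _ ≤ _ := Nat.mul_le_mul_left _ h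
  | succ b ih => exact (factorial_step k a b ha ih).le

/-- Lemma 2 of the paper (factorial form): consolidating two perfect rules with
the same label, capturing `a` and `b` observations respectively, into a single
perfect rule capturing all `a+b` observations strictly increases the
likelihood.  Equivalently,
`(a+b+α−1)! · (a+2α−1)! · (b+2α−1)! > (a+b+2α−1)! · (a+α−1)! · (b+α−1)! · (α−1)!`. -/
theorem consolidate_perfect_rules_increases_likelihood (α a b : ℕ)
    (hα : 1 ≤ α) (ha : 1 ≤ a) (hb : 1 ≤ b) :
    (a + b + 2 * α - 1)! * (a + α - 1)! * (b + α - 1)! * (α - 1)!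
      < (a + b + α - 1)! * (a + 2 * α - 1)! * (b + 2 * α - 1)! := by
  obtain ⟨k, rfl⟩ := Nat.exists_eq_add_of_le' hα
  obtain ⟨c, rfl⟩ := Nat.exists_eq_add_of_le' hb
  exact factorial_step k a c ha (factorial_weak k a c ha)
end

section
/- For all natural numbers α ≥ 1, a ≥ 1, and b ≥ 1, one has (a+b+α−1)! · (α−1)! / (a+b+2α−1)! > [(a+α−1)! · (α−1)! / (a+2α−1)!] · [(b+α−1)! · (α−1)! / (b+2α−1)!] · (2α−1)!/((α−1)!)²; that is, the likelihood ratio for consolidating two perfect rules exceeds Γ(2α)/Γ(α)². -/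
open Nat

/-!
Write `α = c + 1`. After clearing denominators the claim is
`(a+c)! (b+c)! (2c+1)! (a+b+2c+1)! < (a+b+c)! c! (a+2c+1)! (b+2c+1)!`.
Both sides agree at `b = 0`. Passing from `b` to `b + 1` multiplies the left side by
`(b+c+1)(a+b+2c+2)` and the right side by `(a+b+c+1)(b+2c+2)`, and the second factor
exceeds the first by `a(c+1) > 0`; so the inequality is strict as soon as `b ≥ 1`.
-/

/-- One step of the induction on `b`: the weak inequality at `b` gives the strict one
at `b + 1`. -/
lemma factorial_ineq_step (c a b : ℕ) (ha : 1 ≤ a)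
    (h : (a + c)! * (b + c)! * (2 * c + 1)! * (a + b + 2 * c + 1)!
      ≤ (a + b + c)! * c ! * (a + 2 * c + 1)! * (b + 2 * c + 1)!) :
    (a + c)! * (b + 1 + c)! * (2 * c + 1)! * (a + (b + 1) + 2 * c + 1)!
      < (a + (b + 1) + c)! * c ! * (a + 2 * c + 1)! * (b + 1 + 2 * c + 1)! := by
  have e1 : (b + 1 + c)! = (b + c + 1) * (b + c)! := by
    rw [← Nat.factorial_succ]; congr 1; ring
  have e2 : (a + (b + 1) + 2 * c + 1)! = (a + b + 2 * c + 2) * (a + b + 2 * c + 1)! := by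
    rw [← Nat.factorial_succ]; congr 1; ring
  have e3 : (a + (b + 1) + c)! = (a + b + c + 1) * (a + b + c)! := by
    rw [← Nat.factorial_succ]; congr 1; ring
  have e4 : (b + 1 + 2 * c + 1)! = (b + 2 * c + 2) * (b + 2 * c + 1)! := by
    rw [← Nat.factorial_succ]; congr 1; ring
  have hlt : (b + c + 1) * (a + b + 2 * c + 2) < (a + b + c + 1) * (b + 2 * c + 2) := by
    nlinarith [Nat.mul_le_mul_right (c + 1) ha]
  rw [e1, e2, e3, e4]
  calc _ = ((b + c + 1) * (a + b + 2 * c + 2))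
          * ((a + c)! * (b + c)! * (2 * c + 1)! * (a + b + 2 * c + 1)!) := by ring
    _ < ((a + b + c + 1) * (b + 2 * c + 2))
          * ((a + c)! * (b + c)! * (2 * c + 1)! * (a + b + 2 * c + 1)!) := by
        exact Nat.mul_lt_mul_of_pos_right hlt (by positivity)
    _ ≤ ((a + b + c + 1) * (b + 2 * c + 2))
          * ((a + b + c)! * c ! * (a + 2 * c + 1)! * (b + 2 * c + 1)!) :=
        Nat.mul_le_mul_left _ h
    _ = _ := by ring

lemma factorial_ineq_le (c a b : ℕ) (ha : 1 ≤ a) :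
    (a + c)! * (b + c)! * (2 * c + 1)! * (a + b + 2 * c + 1)!
      ≤ (a + b + c)! * c ! * (a + 2 * c + 1)! * (b + 2 * c + 1)! := by
  induction b with
  | zero =>
    simp only [Nat.add_zero, Nat.zero_add]
    exact le_of_eq (by ring)
  | succ b ih => exact (factorial_ineq_step c a b ha ih).le

/-- The quantitative bound inside the proof of Lemma 2: the likelihood ratio
for consolidating two perfect rules (with positive-integer prior parameter `α`)
exceeds `Γ(2α)/Γ(α)² = (2α−1)!/((α−1)!)²`. -/
theorem consolidation_likelihood_ratio_bound (α a b : ℕ)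
    (hα : 1 ≤ α) (ha : 1 ≤ a) (hb : 1 ≤ b) :
    ((a + b + α - 1)! * (α - 1)! : ℝ) / (a + b + 2 * α - 1)!
      > (((a + α - 1)! * (α - 1)! : ℝ) / (a + 2 * α - 1)!)
        * (((b + α - 1)! * (α - 1)! : ℝ) / (b + 2 * α - 1)!)
        * (((2 * α - 1)! : ℝ) / ((α - 1)! : ℝ) ^ 2) := by
  obtain ⟨c, rfl⟩ := Nat.exists_eq_add_of_le' hα
  obtain ⟨b, rfl⟩ := Nat.exists_eq_add_of_le' hb
  have key := factorial_ineq_step c a b ha (factorial_ineq_le c a b ha)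
  generalize b + 1 = b at *
  -- Removing the truncated subtractions.
  rw [show a + b + (c + 1) - 1 = a + b + c by omega, show c + 1 - 1 = c by omega,
    show a + b + 2 * (c + 1) - 1 = a + b + 2 * c + 1 by omega,
    show a + (c + 1) - 1 = a + c by omega, show b + (c + 1) - 1 = b + c by omega,
    show a + 2 * (c + 1) - 1 = a + 2 * c + 1 by omega,
    show b + 2 * (c + 1) - 1 = b + 2 * c + 1 by omega,
    show 2 * (c + 1) - 1 = 2 * c + 1 by omega]
  have keyR : ((a + c)! * (b + c)! * (2 * c + 1)! * (a + b + 2 * c + 1)! : ℝ)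
      < (a + b + c)! * c ! * (a + 2 * c + 1)! * (b + 2 * c + 1)! := by
    exact_mod_cast key
  have hc : (c ! : ℝ) ≠ 0 := by positivity
  have e : (((a + c)! * c ! : ℝ) / (a + 2 * c + 1)!)
        * (((b + c)! * c ! : ℝ) / (b + 2 * c + 1)!) * (((2 * c + 1)! : ℝ) / (c ! : ℝ) ^ 2)
      = ((a + c)! * (b + c)! * (2 * c + 1)!) / ((a + 2 * c + 1)! * (b + 2 * c + 1)!) := by
    field_simp
  rw [e, gt_iff_lt, div_lt_div_iff₀ (by positivity) (by positivity)]
  linarith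
end
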